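/- Let q ≥ 2 be an integer and let f, g ∈ L²(ℝ₊^q) be such that |f| ≤ M_f almost everywhere and f vanishes almost everywhere outside a q-dimensional square S_f ⊂ ℝ₊^q. Then for every integer 1 ≤ r ≤ q, the star contraction f ⋆_r^{r−1} g belongs to L²(ℝ₊^{2q−2r+1}) and ‖f ⋆_r^{r−1} g‖²_{L²(ℝ₊^{2q−2r+1})} ≤ M_f² μ(S_f)^{(q−1)/q} ‖g‖²_{L²(ℝ₊^q)}. -/

import Mathlib

open MeasureTheory Filter Topology

noncomputable section

/-- The positive orthant `ℝ₊ⁿ` inside `ℝⁿ`. -/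
def posOrthant (n : ℕ) : Set (Fin n → ℝ) := {x | ∀ i, 0 ≤ x i}

/-- Lebesgue measure restricted to the positive orthant; the measure underlying `L²(ℝ₊ⁿ)`. -/
def μpos (n : ℕ) : MeasureTheory.Measure (Fin n → ℝ) :=
  MeasureTheory.volume.restrict (posOrthant n)

/-- Total extension of a finite tuple, giving the junk value `0` out of range. -/
def pad {k : ℕ} (t : Fin k → ℝ) (i : ℕ) : ℝ := if h : i < k then t ⟨i, h⟩ else 0

/-- The `L²` inner product `⟨f, g⟩ = ∫ f ⬝ conj g` over the positive orthant. -/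
def L2inner (n : ℕ) (f g : (Fin n → ℝ) → ℂ) : ℂ :=
  ∫ x, f x * (starRingEnd ℂ) (g x) ∂(μpos n)

/-- The `L²` norm over the positive orthant. -/
def L2norm (n : ℕ) (f : (Fin n → ℝ) → ℂ) : ℝ :=
  Real.sqrt (∫ x, ‖f x‖ ^ 2 ∂(μpos n))

/-- The adjoint `f*(t₁,…,tₙ) = conj (f (tₙ,…,t₁))`. -/
def adjF (n : ℕ) (f : (Fin n → ℝ) → ℂ) : (Fin n → ℝ) → ℂ :=
  fun t => (starRingEnd ℂ) (f fun i => t i.rev)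

/-- `f` is symmetric when `f = f*` a.e. on the positive orthant. -/
def IsSymmFn (n : ℕ) (f : (Fin n → ℝ) → ℂ) : Prop :=
  ∀ᵐ t ∂(μpos n), f t = adjF n f t

/-- Reindexing a multivariate function along an equality of dimensions. -/
def reindex {a b : ℕ} (h : a = b) (F : (Fin a → ℝ) → ℂ) : (Fin b → ℝ) → ℂ :=
  fun t => F fun j => t (Fin.cast h j)

/-- The integrand (in the `s`-variables) of the `p`-th arc contraction
`(f ⌢_p g)(t₁,…,t_{m+n-2p}) = ∫ f(t₁,…,t_{m-p},s_p,…,s₁) g(s₁,…,s_p,t_{m-p+1},…,t_{m+n-2p}) ds`. -/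
def arcKer (m n p : ℕ) (f : (Fin m → ℝ) → ℂ) (g : (Fin n → ℝ) → ℂ)
    (t : Fin (m + n - 2 * p) → ℝ) (s : Fin p → ℝ) : ℂ :=
  f (fun j => if (j : ℕ) < m - p then pad t j else pad s (m - 1 - (j : ℕ))) *
  g (fun j => if (j : ℕ) < p then pad s j else pad t (m + (j : ℕ) - 2 * p))

/-- The `p`-th arc contraction `f ⌢_p g`. -/
def arc (m n p : ℕ) (f : (Fin m → ℝ) → ℂ) (g : (Fin n → ℝ) → ℂ) :
    (Fin (m + n - 2 * p) → ℝ) → ℂ :=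
  fun t => ∫ s in posOrthant p, arcKer m n p f g t s

/-- The integrand of the star contraction of index `(p, p-1)`:
`(f ⋆_p^{p-1} g)(t₁,…,t_{m+n-2p+1})
  = ∫ f(t₁,…,t_{m-p},t_{m-p+1},s_{p-1},…,s₁) g(s₁,…,s_{p-1},t_{m-p+1},…,t_{m+n-2p+1}) ds`. -/
def starKer (m n p : ℕ) (f : (Fin m → ℝ) → ℂ) (g : (Fin n → ℝ) → ℂ)
    (t : Fin (m + n + 1 - 2 * p) → ℝ) (s : Fin (p - 1) → ℝ) : ℂ :=
  f (fun j => if (j : ℕ) < m - p + 1 then pad t j else pad s (m - 1 - (j : ℕ))) *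
  g (fun j => if (j : ℕ) < p - 1 then pad s j else pad t (m + (j : ℕ) + 1 - 2 * p))

/-- The star contraction `f ⋆_p^{p-1} g` of index `(p, p-1)`. -/
def starC (m n p : ℕ) (f : (Fin m → ℝ) → ℂ) (g : (Fin n → ℝ) → ℂ) :
    (Fin (m + n + 1 - 2 * p) → ℝ) → ℂ :=
  fun t => ∫ s in posOrthant (p - 1), starKer m n p f g t s

/-- The `q/2`-th arc contraction of two functions of `q` (even) variables,
expressed again as a function of `q` variables. -/
def contrHalf (q : ℕ) (f g : (Fin q → ℝ) → ℂ) : (Fin q → ℝ) → ℂ :=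
  fun t => ∫ s in posOrthant (q / 2),
    (f fun j => if (j : ℕ) < q - q / 2 then pad t j else pad s (q - 1 - (j : ℕ))) *
    (g fun j => if (j : ℕ) < q / 2 then pad s j else pad t (q + (j : ℕ) - 2 * (q / 2)))

/-- The full contraction `f ⌢_q g = ∫ f(t₁,…,t_q) g(t_q,…,t₁) dt` of two
functions of `q` variables. -/
def fullContr (q : ℕ) (f g : (Fin q → ℝ) → ℂ) : ℂ :=
  ∫ t in posOrthant q, f t * g fun i => t i.rev

/-- A `q`-dimensional square (cube): a product of `q` intervals of equal length. -/
def IsCube (q : ℕ) (S : Set (Fin q → ℝ)) : Prop :=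
  ∃ (a : Fin q → ℝ) (c : ℝ), S = Set.univ.pi fun i => Set.Icc (a i) (a i + c)

/-- One step of the left-bracketed iterated contraction, keeping track of the dimension. -/
def iterStep (q : ℕ) (acc : (d : ℕ) × ((Fin d → ℝ) → ℂ))
    (pr : ℕ × ((Fin q → ℝ) → ℂ)) : (d : ℕ) × ((Fin d → ℝ) → ℂ) :=
  ⟨acc.1 + q - 2 * pr.1, arc acc.1 q pr.1 acc.2 pr.2⟩

/-- The left-bracketed iterated contraction `(⋯((f₀ ⌢_{r₁} f₁) ⌢_{r₂} f₂)⋯) ⌢_{r_k} f_k`. -/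
def iterArc (q : ℕ) (f0 : (Fin q → ℝ) → ℂ) (l : List (ℕ × ((Fin q → ℝ) → ℂ))) :
    (d : ℕ) × ((Fin d → ℝ) → ℂ) :=
  l.foldl (iterStep q) ⟨q, f0⟩

/-- The value of a (`0`-dimensional, i.e. scalar) iterated contraction. -/
def scalarOf (x : (d : ℕ) × ((Fin d → ℝ) → ℂ)) : ℂ := x.2 fun _ => 0

/-!
For a fixed value of the shared variable, `f ⋆_r^{r-1} g` is the composition of two integral
kernels, so by Cauchy–Schwarz its `L²` norm in the free variables is at most the product of the `L²`
norms of the corresponding slices of `f` and `g`. The slice of `f` is bounded by `M_f` and supported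
in a cube of dimension `q - 1`, of measure at most `μ(S_f)^{(q-1)/q}` whatever the shared variable
is; integrating the squared bound over that variable turns the norms of the slices of `g`
into `‖g‖²`.
-/

section Kernels

variable {B X Y Z R : Type*} [MeasurableSpace B] [MeasurableSpace X] [MeasurableSpace Y]
  [MeasurableSpace Z] {β : Measure B} {μ : Measure X} {ν : Measure Y} {ρ : Measure Z}

theorem eLpNorm_two_sq [NormedAddCommGroup R] (f : X → R) :
    eLpNorm f 2 μ ^ 2 = ∫⁻ x, ‖f x‖ₑ ^ 2 ∂μ := by
  simpa using eLpNorm_nnreal_pow_eq_lintegral (f := f) (μ := μ) (p := 2) two_ne_zero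

theorem eLpNorm_two_prod_sq [SFinite μ] [NormedAddCommGroup R] {f : B × X → R}
    (hf : AEStronglyMeasurable f (β.prod μ)) :
    eLpNorm f 2 (β.prod μ) ^ 2 = ∫⁻ b, eLpNorm (fun x => f (b, x)) 2 μ ^ 2 ∂β := by
  simp only [eLpNorm_two_sq]
  exact lintegral_prod _ (hf.enorm.pow_const 2)

theorem eLpNorm_le_of_ae_bound_of_ae_eq_zero [NormedAddCommGroup R] {p : ENNReal} {f : X → R}
    {M : ℝ} {S : Set X} (hM : ∀ᵐ x ∂μ, ‖f x‖ ≤ M) (hS : ∀ᵐ x ∂μ, x ∉ S → f x = 0) :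
    eLpNorm f p μ ≤ ‖M‖ₑ * μ S ^ (1 / p.toReal) := by
  refine (eLpNorm_mono_ae_real ?_).trans (eLpNorm_indicator_const_le M p)
  filter_upwards [hM, hS] with x hxM hxS
  by_cases hx : x ∈ S
  · simpa only [Set.indicator_of_mem hx] using hxM
  · simp only [hxS hx, norm_zero, Set.indicator_of_notMem hx, le_refl]

variable [NormedRing R] [NormedSpace ℝ R]

theorem enorm_integral_mul_le_eLpNorm_two {f g : X → R} (hf : AEStronglyMeasurable f μ)
    (hg : AEStronglyMeasurable g μ) :
    ‖∫ x, f x * g x ∂μ‖ₑ ≤ eLpNorm f 2 μ * eLpNorm g 2 μ :=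
  calc ‖∫ x, f x * g x ∂μ‖ₑ ≤ ∫⁻ x, ‖f x * g x‖ₑ ∂μ := enorm_integral_le_lintegral_enorm _
    _ = eLpNorm (f • g) 1 μ := eLpNorm_one_eq_lintegral_enorm.symm
    _ ≤ eLpNorm f 2 μ * eLpNorm g 2 μ := eLpNorm_smul_le_mul_eLpNorm hg hf

theorem eLpNorm_two_integral_mul_le [SFinite μ] [SFinite ν] [SFinite ρ]
    {K : X × Y → R} {L : Y × Z → R}
    (hK : AEStronglyMeasurable K (μ.prod ν)) (hL : AEStronglyMeasurable L (ν.prod ρ)) :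
    eLpNorm (fun p : X × Z => ∫ y, K (p.1, y) * L (y, p.2) ∂ν) 2 (μ.prod ρ) ≤
      eLpNorm K 2 (μ.prod ν) * eLpNorm L 2 (ν.prod ρ) := by
  have hK_sq : AEMeasurable (fun p => ‖K p‖ₑ ^ 2) (μ.prod ν) := hK.enorm.pow_const 2
  have hL_sq : AEMeasurable (fun p => ‖L p‖ₑ ^ 2) (ν.prod ρ) := hL.enorm.pow_const 2
  have hK_sect := Measure.quasiMeasurePreserving_fst (ν := ρ).ae hK.prodMk_left
  have hL_sect := Measure.quasiMeasurePreserving_snd (μ := μ).ae hL.prod_swap.prodMk_left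
  rw [← ENNReal.pow_le_pow_left_iff two_ne_zero, mul_pow]
  simp only [eLpNorm_two_sq]
  calc ∫⁻ p : X × Z, ‖∫ y, K (p.1, y) * L (y, p.2) ∂ν‖ₑ ^ 2 ∂μ.prod ρ
      ≤ ∫⁻ p : X × Z, (∫⁻ y, ‖K (p.1, y)‖ₑ ^ 2 ∂ν) * ∫⁻ y, ‖L (y, p.2)‖ₑ ^ 2 ∂ν ∂μ.prod ρ := by
        refine lintegral_mono_ae ?_
        filter_upwards [hK_sect, hL_sect] with p hKp hLp
        simpa only [mul_pow, eLpNorm_two_sq, Prod.swap_prod_mk] using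
          pow_le_pow_left' (enorm_integral_mul_le_eLpNorm_two hKp hLp) 2
    _ = (∫⁻ x, ∫⁻ y, ‖K (x, y)‖ₑ ^ 2 ∂ν ∂μ) * ∫⁻ z, ∫⁻ y, ‖L (y, z)‖ₑ ^ 2 ∂ν ∂ρ :=
        lintegral_prod_mul hK_sq.lintegral_prod_right' hL_sq.prod_swap.lintegral_prod_right'
    _ = (∫⁻ p, ‖K p‖ₑ ^ 2 ∂μ.prod ν) * ∫⁻ p, ‖L p‖ₑ ^ 2 ∂ν.prod ρ := by
        rw [lintegral_prod _ hK_sq, lintegral_prod_symm _ hL_sq]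

theorem aestronglyMeasurable_fiberwise_integral_mul
    [SFinite β] [SFinite μ] [SFinite ν] [SFinite ρ] {F : B × X × Y → R} {G : B × Y × Z → R}
    (hF : AEStronglyMeasurable F (β.prod (μ.prod ν)))
    (hG : AEStronglyMeasurable G (β.prod (ν.prod ρ))) :
    AEStronglyMeasurable (fun p : B × X × Z => ∫ y, F (p.1, p.2.1, y) * G (p.1, y, p.2.2) ∂ν)
      (β.prod (μ.prod ρ)) := by
  have hid := Measure.QuasiMeasurePreserving.id β
  have hBXY : Measure.QuasiMeasurePreserving
      (fun p : (B × X × Z) × Y => (p.1.1, p.1.2.1, p.2)) ((β.prod (μ.prod ρ)).prod ν)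
      (β.prod (μ.prod ν)) :=
    (measurePreserving_prodAssoc β μ ν).quasiMeasurePreserving.comp
      (QuasiMeasurePreserving.prodMap
        (QuasiMeasurePreserving.prodMap hid Measure.quasiMeasurePreserving_fst) (.id ν))
  have hBYZ : Measure.QuasiMeasurePreserving
      (fun p : (B × X × Z) × Y => (p.1.1, p.2, p.1.2.2)) ((β.prod (μ.prod ρ)).prod ν)
      (β.prod (ν.prod ρ)) :=
    (QuasiMeasurePreserving.prodMap hid
      Measure.measurePreserving_swap.quasiMeasurePreserving).comp
      ((measurePreserving_prodAssoc β ρ ν).quasiMeasurePreserving.comp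
        (QuasiMeasurePreserving.prodMap
          (QuasiMeasurePreserving.prodMap hid Measure.quasiMeasurePreserving_snd) (.id ν)))
  exact ((hF.comp_quasiMeasurePreserving hBXY).mul
    (hG.comp_quasiMeasurePreserving hBYZ)).integral_prod_right'

theorem eLpNorm_two_fiberwise_integral_mul_le
    [SFinite β] [SFinite μ] [SFinite ν] [SFinite ρ] {F : B × X × Y → R} {G : B × Y × Z → R}
    (hF : AEStronglyMeasurable F (β.prod (μ.prod ν)))
    (hG : AEStronglyMeasurable G (β.prod (ν.prod ρ))) {C : ENNReal}
    (hC : ∀ᵐ b ∂β, eLpNorm (fun p => F (b, p)) 2 (μ.prod ν) ≤ C) :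
    eLpNorm (fun p : B × X × Z => ∫ y, F (p.1, p.2.1, y) * G (p.1, y, p.2.2) ∂ν) 2
      (β.prod (μ.prod ρ)) ≤ C * eLpNorm G 2 (β.prod (ν.prod ρ)) := by
  rw [← ENNReal.pow_le_pow_left_iff two_ne_zero, mul_pow, eLpNorm_two_prod_sq hG,
    eLpNorm_two_prod_sq (aestronglyMeasurable_fiberwise_integral_mul hF hG)]
  refine (lintegral_mono_ae ?_).trans_eq
    (lintegral_const_mul'' _ (by simpa only [eLpNorm_two_sq] using
      (hG.enorm.pow_const 2).lintegral_prod_right'))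
  filter_upwards [hC, hF.prodMk_left, hG.prodMk_left] with b hCb hFb hGb
  rw [← mul_pow]
  gcongr
  exact (eLpNorm_two_integral_mul_le hFb hGb).trans (by gcongr)

end Kernels

section Blocks

variable {ι κ η α X : Type*} [MeasurableSpace X]

/-- Reassembling a tuple indexed by `α` from its three blocks of coordinates along `σ`. -/
def blockMerge (σ : ι ⊕ κ ⊕ η ≃ α) : (ι → X) × (κ → X) × (η → X) ≃ᵐ (α → X) :=
  ((MeasurableEquiv.refl (ι → X)).prodCongr
    (MeasurableEquiv.sumPiEquivProdPi fun _ : κ ⊕ η => X).symm).trans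
  ((MeasurableEquiv.sumPiEquivProdPi fun _ : ι ⊕ κ ⊕ η => X).symm.trans
    (MeasurableEquiv.piCongrLeft (fun _ => X) σ))

theorem blockMerge_apply (σ : ι ⊕ κ ⊕ η ≃ α) (y : (ι → X) × (κ → X) × (η → X))
    (i : ι ⊕ κ ⊕ η) : blockMerge σ y (σ i) = Sum.elim y.1 (Sum.elim y.2.1 y.2.2) i := by
  refine (MeasurableEquiv.piCongrLeft_apply_apply (β := fun _ => X) σ _ i).trans ?_
  rcases i with i | i | i <;> rfl

theorem eq_blockMerge_iff {σ : ι ⊕ κ ⊕ η ≃ α} {y : (ι → X) × (κ → X) × (η → X)}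
    {x : α → X} : x = blockMerge σ y ↔ (∀ i, x (σ (.inl i)) = y.1 i) ∧
      (∀ i, x (σ (.inr (.inl i))) = y.2.1 i) ∧ ∀ i, x (σ (.inr (.inr i))) = y.2.2 i := by
  simp only [funext_iff, ← σ.forall_congr_right, Sum.forall, blockMerge_apply, Sum.elim_inl,
    Sum.elim_inr]

theorem blockMerge_mem_univ_pi_iff {σ : ι ⊕ κ ⊕ η ≃ α} {y : (ι → X) × (κ → X) × (η → X)}
    {I : α → Set X} : blockMerge σ y ∈ Set.univ.pi I ↔ (∀ i, y.1 i ∈ I (σ (.inl i))) ∧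
      (∀ i, y.2.1 i ∈ I (σ (.inr (.inl i)))) ∧ ∀ i, y.2.2 i ∈ I (σ (.inr (.inr i))) := by
  simp only [Set.mem_univ_pi, ← σ.forall_congr_right, Sum.forall, blockMerge_apply, Sum.elim_inl,
    Sum.elim_inr]

theorem measurePreserving_blockMerge [Fintype ι] [Fintype κ] [Fintype η] [Fintype α]
    (σ : ι ⊕ κ ⊕ η ≃ α) (ν : Measure X) [SigmaFinite ν] :
    MeasurePreserving (blockMerge σ)
      ((Measure.pi fun _ : ι => ν).prod ((Measure.pi fun _ : κ => ν).prod
        (Measure.pi fun _ : η => ν))) (Measure.pi fun _ : α => ν) := by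
  have merge_tail := measurePreserving_sumPiEquivProdPi_symm fun _ : κ ⊕ η => ν
  have merge_all := measurePreserving_sumPiEquivProdPi_symm fun _ : ι ⊕ κ ⊕ η => ν
  have relabel := measurePreserving_piCongrLeft (fun _ : α => ν) σ
  exact relabel.comp (merge_all.comp ((MeasurePreserving.id _).prod merge_tail))

end Blocks

/-- Lebesgue measure on the half line `ℝ₊`. -/
def halfLineMeasure : Measure ℝ := volume.restrict (Set.Ici 0)

instance : SigmaFinite halfLineMeasure := by unfold halfLineMeasure; infer_instance

theorem μpos_eq_pi (n : ℕ) : μpos n = Measure.pi fun _ : Fin n => halfLineMeasure := by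
  have orthant_eq : posOrthant n = Set.univ.pi fun _ => Set.Ici 0 := by
    ext x
    simp only [posOrthant, Set.mem_ofPred_eq, Set.mem_univ_pi, Set.mem_Ici]
  rw [μpos, orthant_eq, volume_pi, Measure.restrict_pi_pi]
  rfl

instance (n : ℕ) : SigmaFinite (μpos n) := by unfold μpos; infer_instance

section Pivot

variable {k l N : ℕ}

/-- The decomposition of `N = k + l + 1` indices into the pivot `k`, the `k` indices before it and
the `l` indices after it. -/
def pivotEquiv (h : k + l + 1 = N) : Unit ⊕ Fin k ⊕ Fin l ≃ Fin N :=
  .ofBijective (Sum.elim (fun _ => ⟨k, by omega⟩)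
      (Sum.elim (fun i => ⟨i, by omega⟩) fun i => ⟨k + 1 + i, by omega⟩)) <| by
    rw [Fintype.bijective_iff_injective_and_card]
    constructor
    · rintro (i | ⟨i, hi⟩ | ⟨i, hi⟩) (j | ⟨j, hj⟩ | ⟨j, hj⟩) <;>
        simp only [Sum.elim_inl, Sum.elim_inr, Fin.mk.injEq, Sum.inl.injEq, Sum.inr.injEq,
          reduceCtorEq, imp_false, imp_self] <;>
        omega
    · simp only [Fintype.card_sum, Fintype.card_unique, Fintype.card_fin]
      omega

theorem pad_val (t : Fin N → ℝ) (i : Fin N) : pad t i = t i := by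
  simp only [pad, i.isLt, dite_true]

theorem pad_blockMerge_pivotEquiv (h : k + l + 1 = N)
    (y : (Unit → ℝ) × (Fin k → ℝ) × (Fin l → ℝ)) :
    pad (blockMerge (pivotEquiv h) y) k = y.1 () :=
  (pad_val _ (pivotEquiv h (.inl ()))).trans (blockMerge_apply _ y _)

theorem pad_blockMerge_pivotEquiv_left (h : k + l + 1 = N)
    (y : (Unit → ℝ) × (Fin k → ℝ) × (Fin l → ℝ)) (i : Fin k) :
    pad (blockMerge (pivotEquiv h) y) i = y.2.1 i :=
  (pad_val _ (pivotEquiv h (.inr (.inl i)))).trans (blockMerge_apply _ y _)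

theorem pad_blockMerge_pivotEquiv_right (h : k + l + 1 = N)
    (y : (Unit → ℝ) × (Fin k → ℝ) × (Fin l → ℝ)) (i : Fin l) :
    pad (blockMerge (pivotEquiv h) y) (k + 1 + i) = y.2.2 i :=
  (pad_val _ (pivotEquiv h (.inr (.inr i)))).trans (blockMerge_apply _ y _)

theorem measurePreserving_blockMerge_μpos (σ : Unit ⊕ Fin k ⊕ Fin l ≃ Fin N) :
    MeasurePreserving (blockMerge σ)
      ((Measure.pi fun _ : Unit => halfLineMeasure).prod ((μpos k).prod (μpos l))) (μpos N) := by
  simpa only [μpos_eq_pi] using measurePreserving_blockMerge σ halfLineMeasure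

end Pivot

section StarContraction

variable {m n p : ℕ}

/-- Coordinates of the first factor of `f ⋆_p^{p-1} g`: the shared variable `t_{m-p+1}`, then the
free variables, then the integration variables, which enter `f` in reverse order. -/
def starLeftEquiv (hp : 1 ≤ p) (hpm : p ≤ m) : Unit ⊕ Fin (m - p) ⊕ Fin (p - 1) ≃ Fin m :=
  (Equiv.sumCongr (.refl _) (.sumCongr (.refl _) Fin.revPerm)).trans (pivotEquiv (by omega))

/-- Coordinates of the second factor of `f ⋆_p^{p-1} g`: the shared variable `t_{m-p+1}`, then the
integration variables, then the free variables. -/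
def starRightEquiv (hp : 1 ≤ p) (hpn : p ≤ n) : Unit ⊕ Fin (p - 1) ⊕ Fin (n - p) ≃ Fin n :=
  pivotEquiv (by omega)

/-- Coordinates of `f ⋆_p^{p-1} g`: the shared variable `t_{m-p+1}`, then the free variables of `f`,
then those of `g`. -/
def starOutputEquiv (hpm : p ≤ m) (hpn : p ≤ n) :
    Unit ⊕ Fin (m - p) ⊕ Fin (n - p) ≃ Fin (m + n + 1 - 2 * p) :=
  pivotEquiv (by omega)

theorem starKer_blockMerge (hp : 1 ≤ p) (hpm : p ≤ m) (hpn : p ≤ n)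
    (f : (Fin m → ℝ) → ℂ) (g : (Fin n → ℝ) → ℂ) (b : Unit → ℝ) (x : Fin (m - p) → ℝ)
    (z : Fin (n - p) → ℝ) (s : Fin (p - 1) → ℝ) :
    starKer m n p f g (blockMerge (starOutputEquiv hpm hpn) (b, x, z)) s =
      f (blockMerge (starLeftEquiv hp hpm) (b, x, s)) *
        g (blockMerge (starRightEquiv hp hpn) (b, s, z)) := by
  unfold starKer starOutputEquiv
  congr 2
  · refine eq_blockMerge_iff.mpr ⟨fun i => ?_, fun i => ?_, fun i => ?_⟩
    · have index_eq : (starLeftEquiv hp hpm (.inl i) : ℕ) = m - p := rfl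
      rw [index_eq, if_pos (by omega), pad_blockMerge_pivotEquiv]
    · have index_eq : (starLeftEquiv hp hpm (.inr (.inl i)) : ℕ) = i := rfl
      rw [index_eq, if_pos (by omega), pad_blockMerge_pivotEquiv_left]
    · have index_eq : (starLeftEquiv hp hpm (.inr (.inr i)) : ℕ) =
        m - p + 1 + (p - 1 - (i + 1)) := rfl
      rw [index_eq, if_neg (by omega),
        show m - 1 - (m - p + 1 + (p - 1 - (i + 1))) = (i : ℕ) by omega, pad_val]
  · refine eq_blockMerge_iff.mpr ⟨fun i => ?_, fun i => ?_, fun i => ?_⟩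
    · have index_eq : (starRightEquiv hp hpn (.inl i) : ℕ) = p - 1 := rfl
      rw [index_eq, if_neg (by omega), show m + (p - 1) + 1 - 2 * p = m - p by omega,
        pad_blockMerge_pivotEquiv]
    · have index_eq : (starRightEquiv hp hpn (.inr (.inl i)) : ℕ) = i := rfl
      rw [index_eq, if_pos i.isLt, pad_val]
    · have index_eq : (starRightEquiv hp hpn (.inr (.inr i)) : ℕ) = p - 1 + 1 + i := rfl
      rw [index_eq, if_neg (by omega),
        show m + (p - 1 + 1 + i) + 1 - 2 * p = m - p + 1 + i by omega,
        pad_blockMerge_pivotEquiv_right]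

theorem starC_comp_blockMerge (hp : 1 ≤ p) (hpm : p ≤ m) (hpn : p ≤ n)
    (f : (Fin m → ℝ) → ℂ) (g : (Fin n → ℝ) → ℂ) :
    starC m n p f g ∘ blockMerge (starOutputEquiv hpm hpn) = fun y =>
      ∫ s, (f ∘ blockMerge (starLeftEquiv hp hpm)) (y.1, y.2.1, s) *
        (g ∘ blockMerge (starRightEquiv hp hpn)) (y.1, s, y.2.2) ∂μpos (p - 1) :=
  funext fun _ => integral_congr_ae (.of_forall fun s => starKer_blockMerge hp hpm hpn f g _ _ _ s)

theorem aestronglyMeasurable_starC (hp : 1 ≤ p) (hpm : p ≤ m) (hpn : p ≤ n)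
    {f : (Fin m → ℝ) → ℂ} {g : (Fin n → ℝ) → ℂ} (hf : AEStronglyMeasurable f (μpos m))
    (hg : AEStronglyMeasurable g (μpos n)) :
    AEStronglyMeasurable (starC m n p f g) (μpos (m + n + 1 - 2 * p)) := by
  have output_mp := measurePreserving_blockMerge_μpos (starOutputEquiv hpm hpn)
  rw [← output_mp.aestronglyMeasurable_comp_iff (MeasurableEquiv.measurableEmbedding _),
    starC_comp_blockMerge hp]
  exact aestronglyMeasurable_fiberwise_integral_mul
    (hf.comp_measurePreserving (measurePreserving_blockMerge_μpos _))
    (hg.comp_measurePreserving (measurePreserving_blockMerge_μpos _))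

theorem eLpNorm_two_starC_le (hp : 1 ≤ p) (hpm : p ≤ m) (hpn : p ≤ n)
    {f : (Fin m → ℝ) → ℂ} {g : (Fin n → ℝ) → ℂ} (hf : AEStronglyMeasurable f (μpos m))
    (hg : AEStronglyMeasurable g (μpos n)) {C : ENNReal}
    (hC : ∀ᵐ b ∂Measure.pi fun _ : Unit => halfLineMeasure,
      eLpNorm (fun y => f (blockMerge (starLeftEquiv hp hpm) (b, y))) 2
        ((μpos (m - p)).prod (μpos (p - 1))) ≤ C) :
    eLpNorm (starC m n p f g) 2 (μpos (m + n + 1 - 2 * p)) ≤ C * eLpNorm g 2 (μpos n) := by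
  have left_mp := measurePreserving_blockMerge_μpos (starLeftEquiv hp hpm)
  have right_mp := measurePreserving_blockMerge_μpos (starRightEquiv hp hpn)
  have output_mp := measurePreserving_blockMerge_μpos (starOutputEquiv hpm hpn)
  rw [← eLpNorm_comp_measurePreserving (aestronglyMeasurable_starC hp hpm hpn hf hg) output_mp,
    ← eLpNorm_comp_measurePreserving hg right_mp, starC_comp_blockMerge]
  exact eLpNorm_two_fiberwise_integral_mul_le (hf.comp_measurePreserving left_mp)
    (hg.comp_measurePreserving right_mp) hC

end StarContraction

section Cube

variable {k l N : ℕ}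

theorem volume_univ_pi_Icc_add (a : Fin N → ℝ) (c : ℝ) :
    volume (Set.univ.pi fun i => Set.Icc (a i) (a i + c)) = ENNReal.ofReal c ^ N := by
  simp only [volume_pi_pi, Real.volume_Icc, add_sub_cancel_left, Finset.prod_const,
    Finset.card_univ, Fintype.card_fin]

theorem μpos_univ_pi_Icc_add_le (a : Fin N → ℝ) (c : ℝ) :
    μpos N (Set.univ.pi fun i => Set.Icc (a i) (a i + c)) ≤ ENNReal.ofReal c ^ N :=
  (Measure.restrict_apply_le _ _).trans_eq (volume_univ_pi_Icc_add a c)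

theorem IsCube.volume_ne_top {S : Set (Fin N → ℝ)} (hS : IsCube N S) : volume S ≠ ⊤ := by
  obtain ⟨a, c, rfl⟩ := hS
  rw [volume_univ_pi_Icc_add]
  exact ENNReal.pow_ne_top ENNReal.ofReal_ne_top

theorem IsCube.prod_μpos_slice_le {S : Set (Fin N → ℝ)} (hS : IsCube N S)
    (σ : Unit ⊕ Fin k ⊕ Fin l ≃ Fin N) (b : Unit → ℝ) :
    (μpos k).prod (μpos l) {y | blockMerge σ (b, y) ∈ S} ≤
      volume S ^ (((N : ℝ) - 1) / N) := by
  obtain ⟨a, c, rfl⟩ := hS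
  have card_eq : N = k + l + 1 := by simpa [add_comm, add_assoc] using (Fintype.card_congr σ).symm
  have slice_subset : {y | blockMerge σ (b, y) ∈ Set.univ.pi fun i => Set.Icc (a i) (a i + c)} ⊆
      (Set.univ.pi fun i => Set.Icc (a (σ (.inr (.inl i)))) (a (σ (.inr (.inl i))) + c)) ×ˢ
        Set.univ.pi fun i => Set.Icc (a (σ (.inr (.inr i)))) (a (σ (.inr (.inr i))) + c) := by
    intro y hy
    obtain ⟨-, hleft, hright⟩ := blockMerge_mem_univ_pi_iff.mp hy
    exact ⟨fun i _ => hleft i, fun i _ => hright i⟩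
  calc (μpos k).prod (μpos l)
        {y | blockMerge σ (b, y) ∈ Set.univ.pi fun i => Set.Icc (a i) (a i + c)}
      ≤ ENNReal.ofReal c ^ k * ENNReal.ofReal c ^ l := by
        refine (measure_mono slice_subset).trans ?_
        rw [Measure.prod_prod]
        exact mul_le_mul' (μpos_univ_pi_Icc_add_le _ c) (μpos_univ_pi_Icc_add_le _ c)
    _ = (ENNReal.ofReal c ^ N) ^ (((N : ℝ) - 1) / N) := by
        have dim_ne_zero : (N : ℝ) ≠ 0 := by rw [card_eq]; positivity
        rw [← pow_add, ← ENNReal.rpow_natCast, ← ENNReal.rpow_natCast, ← ENNReal.rpow_mul,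
          mul_div_cancel₀ _ dim_ne_zero]
        simp [card_eq]
    _ = volume (Set.univ.pi fun i => Set.Icc (a i) (a i + c)) ^ (((N : ℝ) - 1) / N) := by
        rw [volume_univ_pi_Icc_add]

theorem ae_eLpNorm_two_slice_le {f : (Fin N → ℝ) → ℂ} {M : ℝ} {S : Set (Fin N → ℝ)}
    (hM : ∀ᵐ t ∂μpos N, ‖f t‖ ≤ M) (hS : IsCube N S) (hf : ∀ᵐ t ∂μpos N, t ∉ S → f t = 0)
    (σ : Unit ⊕ Fin k ⊕ Fin l ≃ Fin N) :
    ∀ᵐ b ∂Measure.pi fun _ : Unit => halfLineMeasure,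
      eLpNorm (fun y => f (blockMerge σ (b, y))) 2 ((μpos k).prod (μpos l)) ≤
        ‖M‖ₑ * (volume S ^ (((N : ℝ) - 1) / N)) ^ (1 / 2 : ℝ) := by
  have hσ := (measurePreserving_blockMerge_μpos σ).quasiMeasurePreserving
  filter_upwards [Measure.ae_ae_of_ae_prod (hσ.ae hM), Measure.ae_ae_of_ae_prod (hσ.ae hf)]
    with b hMb hfb
  refine (eLpNorm_le_of_ae_bound_of_ae_eq_zero hMb hfb).trans ?_
  rw [ENNReal.toReal_ofNat]
  gcongr
  exact hS.prod_μpos_slice_le σ b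

end Cube

theorem L2norm_eq_toReal_eLpNorm {n : ℕ} {f : (Fin n → ℝ) → ℂ}
    (hf : AEStronglyMeasurable f (μpos n)) : L2norm n f = (eLpNorm f 2 (μpos n)).toReal := by
  rw [toReal_eLpNorm hf, lpNorm_eq_integral_norm_rpow_toReal two_ne_zero ENNReal.ofNat_ne_top hf,
    L2norm, Real.sqrt_eq_rpow]
  simp

theorem star_contraction_norm_sq_bound_general {m n p : ℕ} (hp : 1 ≤ p) (hpm : p ≤ m) (hpn : p ≤ n)
    {f : (Fin m → ℝ) → ℂ} {g : (Fin n → ℝ) → ℂ} (hf : AEStronglyMeasurable f (μpos m))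
    (hg : MemLp g 2 (μpos n)) {M : ℝ} (hM : ∀ᵐ t ∂μpos m, ‖f t‖ ≤ M)
    {S : Set (Fin m → ℝ)} (hS : IsCube m S) (hfS : ∀ᵐ t ∂μpos m, t ∉ S → f t = 0) :
    MemLp (starC m n p f g) 2 (μpos (m + n + 1 - 2 * p)) ∧
      L2norm (m + n + 1 - 2 * p) (starC m n p f g) ^ 2 ≤
        M ^ 2 * (volume S).toReal ^ (((m : ℝ) - 1) / m) * L2norm n g ^ 2 := by
  have starC_meas := aestronglyMeasurable_starC hp hpm hpn hf hg.1
  have norm_le := eLpNorm_two_starC_le hp hpm hpn hf hg.1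
    (ae_eLpNorm_two_slice_le hM hS hfS (starLeftEquiv hp hpm))
  have bound_lt_top :
      ‖M‖ₑ * (volume S ^ (((m : ℝ) - 1) / m)) ^ (1 / 2 : ℝ) * eLpNorm g 2 (μpos n) < ⊤ := by
    have exponent_nonneg : 0 ≤ ((m : ℝ) - 1) / m :=
      div_nonneg (sub_nonneg.mpr (Nat.one_le_cast.mpr (hp.trans hpm))) m.cast_nonneg
    have slice_ne_top := ENNReal.rpow_ne_top_of_nonneg exponent_nonneg hS.volume_ne_top
    exact ENNReal.mul_lt_top (ENNReal.mul_lt_top enorm_lt_top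
      (ENNReal.rpow_lt_top_of_nonneg (by norm_num) slice_ne_top)) hg.2
  refine ⟨⟨starC_meas, norm_le.trans_lt bound_lt_top⟩, ?_⟩
  calc L2norm (m + n + 1 - 2 * p) (starC m n p f g) ^ 2
      ≤ (‖M‖ₑ * (volume S ^ (((m : ℝ) - 1) / m)) ^ (1 / 2 : ℝ) *
          eLpNorm g 2 (μpos n)).toReal ^ 2 := by
        rw [L2norm_eq_toReal_eLpNorm starC_meas]
        gcongr
        exact bound_lt_top.ne
    _ = M ^ 2 * (volume S).toReal ^ (((m : ℝ) - 1) / m) * L2norm n g ^ 2 := by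
        rw [L2norm_eq_toReal_eLpNorm hg.1, ENNReal.toReal_mul, ENNReal.toReal_mul, toReal_enorm,
          ← ENNReal.toReal_rpow, ← ENNReal.toReal_rpow, ← Real.sqrt_eq_rpow, mul_pow, mul_pow,
          Real.sq_sqrt (by positivity), Real.norm_eq_abs, sq_abs]

/-- `‖f ⋆_r^{r-1} g‖² ≤ M_f² μ(S_f)^{(q-1)/q} ‖g‖²` for bounded,
boundedly supported `f`. -/
theorem star_contraction_norm_sq_bound (q : ℕ) (hq2 : 2 ≤ q)
    (f g : (Fin q → ℝ) → ℂ)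
    (hf : MeasureTheory.MemLp f 2 (μpos q)) (hg : MeasureTheory.MemLp g 2 (μpos q))
    (Mf : ℝ) (hbf : ∀ᵐ t ∂(μpos q), ‖f t‖ ≤ Mf)
    (Sf : Set (Fin q → ℝ)) (hSf : IsCube q Sf) (hSf' : Sf ⊆ posOrthant q)
    (hsf : ∀ᵐ t ∂(μpos q), t ∉ Sf → f t = 0)
    (r : ℕ) (hr1 : 1 ≤ r) (hrq : r ≤ q) :
    MeasureTheory.MemLp (starC q q r f g) 2 (μpos (q + q + 1 - 2 * r)) ∧
    (L2norm (q + q + 1 - 2 * r) (starC q q r f g)) ^ 2 ≤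
      Mf ^ 2 * (MeasureTheory.volume Sf).toReal ^ (((q : ℝ) - 1) / (q : ℝ))
        * (L2norm q g) ^ 2 := by
  exact star_contraction_norm_sq_bound_general hr1 hrq hrq hf.1 hg hbf hSf hsf

end
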